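/- arXiv:0906.5491 — 6 statements merged into one kernel-verified Lean document; each statement's English description precedes it below -/
import Mathlib

section
/- Let G = ⟨x, y | x y² x⁻¹ = y³⟩, let H be the normal closure of y⁴ in G, let F be the free group on generators z_i (i ∈ ℤ), and let π′ : F → H be the epimorphism sending z_i ↦ x^i y⁴ x^{-i}, with kernel R. Suppose r ∈ R satisfies ∂r/∂z_i = 0 in ℤH for all i outside {0, 1, …, n}. Then there exist finitely many elements s₁, …, s_m ∈ R, each lying in the subgroup of F generated by z₀, …, z_n, and elements f₁, …, f_m ∈ F, such that r is congruent to the product f₁ s₁ f₁⁻¹ · f₂ s₂ f₂⁻¹ ⋯ f_m s_m f_m⁻¹ modulo the commutator subgroup [R,R]. -/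
/-- The single relator `x y² x⁻¹ y⁻³` in the free group on two generators. -/
def bsRels : Set (FreeGroup (Fin 2)) :=
  {FreeGroup.of 0 * FreeGroup.of 1 ^ 2 * (FreeGroup.of 0)⁻¹ * (FreeGroup.of 1 ^ 3)⁻¹}

/-- The Baumslag–Solitar group `G = ⟨x, y | x y² x⁻¹ = y³⟩`. -/
abbrev BSGroup := PresentedGroup bsRels

/-- `x ∈ G`. -/
def bsX : BSGroup := PresentedGroup.of 0

/-- `y ∈ G`. -/
def bsY : BSGroup := PresentedGroup.of 1

/-- `H`, the normal closure of `y⁴` in `G`. -/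
def bsH : Subgroup BSGroup := Subgroup.normalClosure {bsY ^ 4}

/-! Read `H` as the vertex set of the Cayley graph carrying an edge from `h` to `h π(z_i)` for each
generator `z_i`. A word `w` traces a path from `1`, and the coefficient of `h` in `∂w/∂z_i` counts,
with sign, how often this path crosses the `i`-th edge at `h`. Hence an additive labelling of the
edges by an abelian group sums along the path to `∑ᵢ ∑ₕ (∂w/∂z_i)ₕ · label(h, i)`.

Write `R = ker π` and `E = ⟨z_i | i ∈ A⟩`, and label the edge `(h, i)` by its Schreier element
`σ(h) z_i σ(h π(z_i))⁻¹` for a lift `σ`. Along `r ∈ R` the labels telescope to a conjugate of `r`.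
If `σ` is chosen compatibly with the cosets of `π(E)`, the labels with `i ∈ A` are conjugates of
elements of `R ∩ E`, so that in `R` modulo `[R, R]` and these conjugates every term of the sum
vanishes: either the label is trivial or `∂r/∂z_i = 0`. -/

section NormalClosure

variable {G : Type*} [Group G]

theorem exists_list_prod_conj_eq_of_mem_normalClosure {K : Subgroup G} {g : G}
    (hg : g ∈ Subgroup.normalClosure (K : Set G)) :
    ∃ l : List (G × G), (∀ p ∈ l, p.2 ∈ K) ∧ (l.map fun p => p.1 * p.2 * p.1⁻¹).prod = g := by
  induction hg using Subgroup.closure_induction with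
  | mem x hx =>
    obtain ⟨k, hk, hconj⟩ := Group.mem_conjugatesOfSet_iff.1 hx
    obtain ⟨f, rfl⟩ := isConj_iff.1 hconj
    exact ⟨[(f, k)], by simpa using hk, by simp⟩
  | one => exact ⟨[], by simp, by simp⟩
  | mul _ _ _ _ ihx ihy =>
    obtain ⟨l, hl, rfl⟩ := ihx
    obtain ⟨l', hl', rfl⟩ := ihy
    exact ⟨l ++ l', List.forall_mem_append.2 ⟨hl, hl'⟩, by simp⟩
  | inv _ _ ih =>
    obtain ⟨l, hl, rfl⟩ := ih
    refine ⟨(l.map fun p => (p.1, p.2⁻¹)).reverse, ?_, ?_⟩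
    · simpa only [List.mem_reverse, List.forall_mem_map, inv_mem_iff] using hl
    · simp [List.prod_inv_reverse, Function.comp_def, mul_assoc]

end NormalClosure

section PathCocycle

variable {G H M : Type*} [Group G] [Group H] [AddGroup M]

/-- `c h w` behaves like the total label of the path in the Cayley graph of `H` that starts at `h`
and reads the word `w`: concatenation of paths corresponds to addition. -/
def IsPathCocycle (π : G →* H) (c : H → G → M) : Prop :=
  ∀ h u v, c h (u * v) = c h u + c (h * π u) v

namespace IsPathCocycle

variable {π : G →* H} {c : H → G → M}

theorem apply_one (hc : IsPathCocycle π c) (h : H) : c h 1 = 0 := by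
  simpa using hc h 1 1

theorem apply_inv (hc : IsPathCocycle π c) (h : H) (u : G) :
    c h u⁻¹ = -c (h * (π u)⁻¹) u := by
  have hloop : c (h * (π u)⁻¹) u + c h u⁻¹ = 0 := by
    simpa [hc.apply_one] using (hc (h * (π u)⁻¹) u u⁻¹).symm
  exact eq_neg_of_add_eq_zero_right hloop

theorem ext_freeGroup {ι : Type*} {π : FreeGroup ι →* H} {c c' : H → FreeGroup ι → M}
    (hc : IsPathCocycle π c) (hc' : IsPathCocycle π c')
    (hof : ∀ h i, c h (FreeGroup.of i) = c' h (FreeGroup.of i)) (h : H) (w : FreeGroup ι) :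
    c h w = c' h w := by
  induction w using FreeGroup.induction_on generalizing h with
  | C1 => rw [hc.apply_one, hc'.apply_one]
  | of i => exact hof h i
  | inv_of i ih => rw [hc.apply_inv, hc'.apply_inv, ih]
  | mul u v ihu ihv => rw [hc, hc', ihu, ihv]

end IsPathCocycle

end PathCocycle

section FoxDerivative

variable {ι H : Type*} [DecidableEq ι] [Group H]

/-- `D i` is, for every `i`, the Fox derivative `∂/∂z_i` with values pushed forward along `π` to the
group ring `ℤH`. -/
structure IsFoxDerivative (π : FreeGroup ι →* H) (D : ι → FreeGroup ι → MonoidAlgebra ℤ H) :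
    Prop where
  apply_of : ∀ i j, D i (FreeGroup.of j) = if j = i then 1 else 0
  apply_mul : ∀ i u v, D i (u * v) = D i u + MonoidAlgebra.of ℤ H (π u) * D i v

namespace IsFoxDerivative

variable {π : FreeGroup ι →* H} {D : ι → FreeGroup ι → MonoidAlgebra ℤ H}

theorem isPathCocycle_translate (hD : IsFoxDerivative π D) (i : ι) :
    IsPathCocycle π fun h w => MonoidAlgebra.of ℤ H h * D i w := by
  intro h u v
  simp only [hD.apply_mul, mul_add, map_mul, mul_assoc]

theorem apply_one (hD : IsFoxDerivative π D) (i : ι) : D i 1 = 0 := by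
  simpa only [map_one, one_mul] using (hD.isPathCocycle_translate i).apply_one 1

theorem apply_inv (hD : IsFoxDerivative π D) (i : ι) (u : FreeGroup ι) :
    D i u⁻¹ = -(MonoidAlgebra.of ℤ H (π u)⁻¹ * D i u) := by
  simpa only [map_one, one_mul] using (hD.isPathCocycle_translate i).apply_inv 1 u

theorem finite_support (hD : IsFoxDerivative π D) (w : FreeGroup ι) :
    (Function.support fun i => D i w).Finite := by
  induction w using FreeGroup.induction_on with
  | C1 => simp [hD.apply_one]
  | of j =>
    refine (Set.finite_singleton j).subset fun i hi => ?_
    by_contra hij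
    exact hi (by simp [hD.apply_of, Ne.symm hij])
  | inv_of j ih =>
    refine ih.subset fun i hi => ?_
    contrapose! hi
    simp_all [hD.apply_inv]
  | mul u v ihu ihv =>
    refine (ihu.union ihv).subset fun i hi => ?_
    contrapose! hi
    simp_all [hD.apply_mul]

variable {M : Type*} [AddCommGroup M]

theorem isPathCocycle_finsum (hD : IsFoxDerivative π D) (Φ : ι → MonoidAlgebra ℤ H →ₗ[ℤ] M) :
    IsPathCocycle π fun h w => ∑ᶠ i, Φ i (MonoidAlgebra.of ℤ H h * D i w) := by
  have hfin (h : H) (w : FreeGroup ι) :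
      (Function.support fun i => Φ i (MonoidAlgebra.of ℤ H h * D i w)).Finite :=
    (hD.finite_support w).subset fun i hi => by
      contrapose! hi
      simp_all
  intro h u v
  simp only [hD.isPathCocycle_translate _ h u v, map_add]
  exact finsum_add_distrib (hfin h u) (hfin (h * π u) v)

theorem eq_finsum_of_isPathCocycle (hD : IsFoxDerivative π D) {c : H → FreeGroup ι → M}
    (hc : IsPathCocycle π c) (h : H) (w : FreeGroup ι) :
    c h w = ∑ᶠ i, (MonoidAlgebra.basis H ℤ).constr ℤ (fun g => c g (FreeGroup.of i))
      (MonoidAlgebra.of ℤ H h * D i w) := by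
  refine hc.ext_freeGroup (hD.isPathCocycle_finsum _) (fun h j => ?_) h w
  rw [finsum_eq_single _ j fun i hij => by simp [hD.apply_of, hij.symm], hD.apply_of, if_pos rfl,
    mul_one, MonoidAlgebra.of_apply, ← MonoidAlgebra.basis_apply, Module.Basis.constr_basis]

theorem eq_zero_of_isPathCocycle (hD : IsFoxDerivative π D) {c : H → FreeGroup ι → M}
    (hc : IsPathCocycle π c) {A : Set ι} (hcA : ∀ i ∈ A, ∀ h, c h (FreeGroup.of i) = 0)
    {w : FreeGroup ι} (hw : ∀ i ∉ A, D i w = 0) (h : H) : c h w = 0 := by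
  rw [hD.eq_finsum_of_isPathCocycle hc]
  refine finsum_eq_zero_of_forall_eq_zero fun i => ?_
  by_cases hi : i ∈ A
  · have hlabel : (fun g => c g (FreeGroup.of i)) = 0 := funext (hcA i hi)
    rw [hlabel, map_zero, LinearMap.zero_apply]
  · rw [hw i hi, mul_zero, map_zero]

end IsFoxDerivative

end FoxDerivative

section SchreierElement

variable {G H : Type*} [Group G] [Group H]

/-- `π ∘ σ` commutes with right translation by the range of `π`. When `π` is surjective this says
that `σ` is, up to a left translation of `H`, a section of `π`. -/
def IsEquivariantLift (π : G →* H) (σ : H → G) : Prop :=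
  ∀ h u, π (σ (h * π u)) = π (σ h) * π u

theorem exists_coset_decomposition (π : G →* H) (E : Subgroup G) :
    ∃ (t : H → H) (e : H → G), (∀ h, e h ∈ E) ∧ (∀ h, t h * π (e h) = h) ∧
      ∀ h, ∀ u ∈ E, t (h * π u) = t h := by
  have hlift (h : H) : ∃ u ∈ E, π u = (h : H ⧸ E.map π).out⁻¹ * h :=
    Subgroup.mem_map.1 (QuotientGroup.eq.1 (QuotientGroup.out_eq' _))
  choose e heE he using hlift
  refine ⟨fun h => (h : H ⧸ E.map π).out, e, heE, fun h => by rw [he, mul_inv_cancel_left],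
    fun h u hu => congrArg Quotient.out ?_⟩
  exact QuotientGroup.mk_mul_of_mem h (Subgroup.mem_map_of_mem π hu)

theorem exists_isEquivariantLift_coset_compatible (π : G →* H) (E : Subgroup G) :
    ∃ σ : H → G, IsEquivariantLift π σ ∧ ∀ h, ∀ u ∈ E, (σ h)⁻¹ * σ (h * π u) ∈ E := by
  obtain ⟨s, f, -, hsf, hs⟩ := exists_coset_decomposition π ⊤
  obtain ⟨t, e, heE, hte, ht⟩ := exists_coset_decomposition π E
  have hst (h : H) : s (t h) = s h := by
    simpa only [hte] using (hs (t h) (e h) (Subgroup.mem_top _)).symm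
  have hπσ (h : H) : π (f (t h) * e h) = (s h)⁻¹ * h := by
    rw [eq_inv_mul_iff_mul_eq, map_mul, ← mul_assoc, ← hst, hsf, hte]
  refine ⟨fun h => f (t h) * e h, fun h u => ?_, fun h u hu => ?_⟩
  · rw [hπσ, hπσ, hs h u (Subgroup.mem_top u), mul_assoc]
  · simpa only [ht h u hu, mul_inv_rev, mul_assoc, inv_mul_cancel_left] using
      E.mul_mem (E.inv_mem (heE h)) (heE (h * π u))

variable {π : G →* H} {σ : H → G}

/-- The Schreier element `σ(h) u σ(h π(u))⁻¹` of `ker π` attached to the lift `σ`. -/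
def schreierElement (hσ : IsEquivariantLift π σ) (h : H) (u : G) : π.ker :=
  ⟨σ h * u * (σ (h * π u))⁻¹, by simp [MonoidHom.mem_ker, hσ h u]⟩

theorem schreierElement_mul (hσ : IsEquivariantLift π σ) (h : H) (u v : G) :
    schreierElement hσ h (u * v) = schreierElement hσ h u * schreierElement hσ (h * π u) v :=
  Subtype.ext (by simp [schreierElement, mul_assoc])

theorem coe_schreierElement_of_mem_ker (hσ : IsEquivariantLift π σ) (h : H) {r : G}
    (hr : r ∈ π.ker) : (schreierElement hσ h r : G) = σ h * r * (σ h)⁻¹ := by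
  simp [schreierElement, MonoidHom.mem_ker.1 hr]

theorem coe_schreierElement_mem_normalClosure (hσ : IsEquivariantLift π σ) {E : Subgroup G}
    {h : H} {u : G} (hu : u ∈ E) (hσu : (σ h)⁻¹ * σ (h * π u) ∈ E) :
    (schreierElement hσ h u : G) ∈ Subgroup.normalClosure ((π.ker ⊓ E : Subgroup G) : Set G) := by
  set s := u * ((σ h)⁻¹ * σ (h * π u))⁻¹ with hs
  have hsE : s ∈ E := E.mul_mem hu (E.inv_mem hσu)
  have hsker : s ∈ π.ker := by simp [hs, MonoidHom.mem_ker, hσ h u]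
  have hs_mem : s ∈ π.ker ⊓ E := ⟨hsker, hsE⟩
  have hconj : (schreierElement hσ h u : G) = σ h * s * (σ h)⁻¹ := by
    simp [schreierElement, hs, mul_assoc]
  rw [hconj]
  exact Subgroup.normalClosure_normal.conj_mem _ (Subgroup.subset_normalClosure hs_mem) _

end SchreierElement

section Support

variable {ι H : Type*} [DecidableEq ι] [Group H] {π : FreeGroup ι →* H}
  {D : ι → FreeGroup ι → MonoidAlgebra ℤ H}

open scoped IsMulCommutative in
theorem IsFoxDerivative.mem_of_schreierElement_mem (hD : IsFoxDerivative π D)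
    {σ : H → FreeGroup ι} (hσ : IsEquivariantLift π σ) {N : Subgroup (FreeGroup ι)} [N.Normal]
    (hcomm : ⁅π.ker, π.ker⁆ ≤ N) {A : Set ι}
    (hA : ∀ i ∈ A, ∀ h, (schreierElement hσ h (FreeGroup.of i) : FreeGroup ι) ∈ N)
    {r : FreeGroup ι} (hr : r ∈ π.ker) (hfox : ∀ i ∉ A, D i r = 0) : r ∈ N := by
  have : IsMulCommutative (π.ker ⧸ N.subgroupOf π.ker) := by
    rw [Subgroup.Normal.quotient_commutative_iff_commutator_le, Subgroup.subgroupOf,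
      ← Subgroup.map_le_iff_le_comap, Subgroup.map_subtype_commutator]
    exact hcomm
  let c (h : H) (w : FreeGroup ι) : Additive (π.ker ⧸ N.subgroupOf π.ker) :=
    Additive.ofMul (schreierElement hσ h w : π.ker ⧸ N.subgroupOf π.ker)
  have hc : IsPathCocycle π c := fun h u v => by simp [c, schreierElement_mul]
  have hc_eq_zero (h : H) (w : FreeGroup ι) :
      c h w = 0 ↔ (schreierElement hσ h w : FreeGroup ι) ∈ N := by
    rw [← Subgroup.mem_subgroupOf, ← QuotientGroup.eq_one_iff]
    exact Iff.rfl
  have hcr : c 1 r = 0 :=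
    hD.eq_zero_of_isPathCocycle hc (fun i hi h => (hc_eq_zero h _).2 (hA i hi h)) hfox 1
  rw [hc_eq_zero, coe_schreierElement_of_mem_ker hσ 1 hr] at hcr
  simpa [mul_assoc] using Subgroup.Normal.conj_mem' ‹N.Normal› _ hcr (σ 1)

theorem IsFoxDerivative.mem_normalClosure_sup_commutator (hD : IsFoxDerivative π D) {A : Set ι}
    {r : FreeGroup ι} (hr : r ∈ π.ker) (hfox : ∀ i ∉ A, D i r = 0) :
    r ∈ Subgroup.normalClosure
      ((π.ker ⊓ Subgroup.closure (FreeGroup.of '' A) : Subgroup (FreeGroup ι)) :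
        Set (FreeGroup ι)) ⊔ ⁅π.ker, π.ker⁆ := by
  set E := Subgroup.closure (FreeGroup.of '' A)
  obtain ⟨σ, hσ, hσE⟩ := exists_isEquivariantLift_coset_compatible π E
  refine hD.mem_of_schreierElement_mem hσ le_sup_right (fun i hi h => ?_) hr hfox
  have hiE : FreeGroup.of i ∈ E := Subgroup.subset_closure (Set.mem_image_of_mem _ hi)
  exact Subgroup.mem_sup_left
    (coe_schreierElement_mem_normalClosure hσ hiE (hσE h _ hiE))

theorem fox_derivative_support_lemma_general (hD : IsFoxDerivative π D) {A : Set ι}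
    {r : FreeGroup ι} (hr : r ∈ π.ker) (hfox : ∀ i ∉ A, D i r = 0) :
    ∃ l : List (FreeGroup ι × FreeGroup ι),
      (∀ p ∈ l, p.2 ∈ π.ker ∧ p.2 ∈ Subgroup.closure (FreeGroup.of '' A)) ∧
      r⁻¹ * (l.map fun p => p.1 * p.2 * p.1⁻¹).prod ∈ ⁅π.ker, π.ker⁆ := by
  obtain ⟨s, hs, k, hk, rfl⟩ :=
    Subgroup.mem_sup_of_normal_left.1 (hD.mem_normalClosure_sup_commutator hr hfox)
  obtain ⟨l, hl, rfl⟩ := exists_list_prod_conj_eq_of_mem_normalClosure hs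
  refine ⟨l, hl, ?_⟩
  simpa only [mul_inv_rev, inv_mul_cancel_right] using inv_mem hk

end Support

/-- Let `G = ⟨x, y | x y² x⁻¹ = y³⟩`, `H` the normal closure of `y⁴` in `G`,
`F` the free group on `z_i (i ∈ ℤ)` and `π′ : F → H` the epimorphism
`z_i ↦ x^i y⁴ x^{-i}`, with kernel `R = ker π′`.  Let `∂/∂z_i : F → ℤH` be the
Fox derivatives (`∂z_j/∂z_i = δ_{ij}` and `∂(uv)/∂z_i = ∂u/∂z_i +
π′(u)·∂v/∂z_i`).  If `r ∈ R` has `∂r/∂z_i = 0` for all `i ∉ {0, 1, …, n}`,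
then there are finitely many `s₁, …, s_m ∈ R`, each a word in the letters
`z₀, …, z_n`, and `f₁, …, f_m ∈ F`, with
`r ≡ (f₁ s₁ f₁⁻¹)(f₂ s₂ f₂⁻¹) ⋯ (f_m s_m f_m⁻¹)  mod [R,R]`. -/
theorem fox_derivative_support_lemma
    (π' : FreeGroup ℤ →* ↥bsH)
    (hπ' : ∀ i : ℤ, ((π' (FreeGroup.of i) : ↥bsH) : BSGroup) =
      bsX ^ i * bsY ^ 4 * bsX ^ (-i))
    (hsurj : Function.Surjective π')
    (D : ℤ → FreeGroup ℤ → MonoidAlgebra ℤ ↥bsH)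
    (hD1 : ∀ i j : ℤ, D i (FreeGroup.of j) = if j = i then 1 else 0)
    (hD2 : ∀ (i : ℤ) (u v : FreeGroup ℤ),
      D i (u * v) = D i u + MonoidAlgebra.of ℤ ↥bsH (π' u) * D i v)
    (r : FreeGroup ℤ) (hr : r ∈ π'.ker) (n : ℕ)
    (hfox : ∀ i : ℤ, i ∉ Set.Icc (0 : ℤ) (n : ℤ) → D i r = 0) :
    ∃ l : List (FreeGroup ℤ × FreeGroup ℤ),
      (∀ p ∈ l, p.2 ∈ π'.ker ∧
        p.2 ∈ Subgroup.closure (FreeGroup.of '' Set.Icc (0 : ℤ) (n : ℤ))) ∧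
      r⁻¹ * (l.map fun p => p.1 * p.2 * p.1⁻¹).prod ∈ ⁅π'.ker, π'.ker⁆ := by
  exact fox_derivative_support_lemma_general ⟨hD1, hD2⟩ hr hfox
end

section
/- Let G be a group generated by a family x, with π : F(x) → G the induced epimorphism from the free group on x, and let g ∈ G be any element. Extend π to an epimorphism π̂ : F(x ⊔ {y}) → G from the free group on the enlarged family by setting π̂(y) = g. Then there is a ℤG-module isomorphism M(G, x ∪ {y}) ≅ M(G, x) ⊕ ℤG between the corresponding relation modules. -/
/-!
Write `s : F(x) → F(x ⊔ Y)` for the inclusion, and let `ρ : F(x ⊔ Y) → F(x)` be a retraction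
over `G`, obtained by sending each `y ∈ Y` to a word in `x` with the same image in `G`. Both induce
maps of relation modules, so `M(G, x)` is a direct summand of `M(G, x ∪ Y)`. The complement is
described by the crossed homomorphism `u ↦ [u (s (ρ u))⁻¹]` from `F(x ⊔ Y)` to `M(G, x ∪ Y)`. It
kills `x`, so it factors through the Fox derivative `F(x ⊔ Y) → ℤG^(Y)`, the universal crossed
homomorphism killing `x`. The Fox derivative itself restricts to a `ℤG`-linear map on
`M(G, x ∪ Y)`, and this splits the factor map, so the complement is free on `Y`.
-/

section CrossedHom

variable {H K R N P ι : Type*} [Group H] [Group K] [Ring R]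
  [AddCommGroup N] [Module R N] [AddCommGroup P] [Module R P]

/-- `d` is a crossed homomorphism (a derivation, or 1-cocycle) from the group `H` to the
`R`-module `N`, where `H` acts on `N` through the monoid homomorphism `χ : H →* R`. -/
def IsCrossedHom (χ : H →* R) (d : H → N) : Prop :=
  ∀ u v, d (u * v) = d u + χ u • d v

namespace IsCrossedHom

theorem zero (χ : H →* R) : IsCrossedHom χ (fun _ => (0 : N)) := fun _ _ => by
  rw [smul_zero, add_zero]

theorem comp_monoidHom {χ : K →* R} {d : K → N} (hd : IsCrossedHom χ d) (f : H →* K) :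
    IsCrossedHom (χ.comp f) (fun u => d (f u)) := fun u v => by
  simp only [map_mul, hd (f u) (f v), MonoidHom.comp_apply]

variable {χ : H →* R} {d : H → N}

theorem linearMap_comp (hd : IsCrossedHom χ d) (f : N →ₗ[R] P) :
    IsCrossedHom χ (fun u => f (d u)) := fun u v => by
  simp only [hd u v, map_add, map_smul]

theorem map_one (hd : IsCrossedHom χ d) : d 1 = 0 := by
  simpa using hd 1 1

theorem map_inv (hd : IsCrossedHom χ d) (u : H) : d u⁻¹ = -(χ u⁻¹ • d u) := by
  have h := hd u⁻¹ u
  rw [inv_mul_cancel, hd.map_one] at h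
  exact eq_neg_of_add_eq_zero_left h.symm

theorem map_mul_inv (hd : IsCrossedHom χ d) (u v : H) :
    d (u * v⁻¹) = d u - χ (u * v⁻¹) • d v := by
  rw [hd, hd.map_inv, smul_neg, ← mul_smul, ← _root_.map_mul, sub_eq_add_neg]

theorem freeGroup_ext {χ : FreeGroup ι →* R} {d d' : FreeGroup ι → N}
    (hd : IsCrossedHom χ d) (hd' : IsCrossedHom χ d')
    (h : ∀ i, d (FreeGroup.of i) = d' (FreeGroup.of i)) (u : FreeGroup ι) : d u = d' u := by
  induction u using FreeGroup.induction_on with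
  | C1 => rw [hd.map_one, hd'.map_one]
  | of i => exact h i
  | inv_of i ih => rw [hd.map_inv, hd'.map_inv, ih]
  | mul u v hu hv => rw [hd, hd', hu, hv]

theorem exists_freeGroup_of_eq (χ : FreeGroup ι →* R) (v : ι → N) :
    ∃ d : FreeGroup ι → N, IsCrossedHom χ d ∧ ∀ i, d (FreeGroup.of i) = v i := by
  -- Crossed homomorphisms `F → N` are the left components of the sections of `N ⋊ F → F`.
  let φ : FreeGroup ι →* MulAut (Multiplicative N) :=
    (MulAutMultiplicative N).symm.toMonoidHom.comp
      ((DistribMulAction.toAddAut Rˣ N).comp χ.toHomUnits)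
  let σ : FreeGroup ι →* Multiplicative N ⋊[φ] FreeGroup ι :=
    FreeGroup.lift fun i => ⟨Multiplicative.ofAdd (v i), FreeGroup.of i⟩
  have σ_right (u : FreeGroup ι) : (σ u).right = u := by
    have h : SemidirectProduct.rightHom.comp σ = MonoidHom.id _ := by ext; simp [σ]
    exact DFunLike.congr_fun h u
  refine ⟨fun u => (σ u).left.toAdd, fun u w => ?_, fun i => by simp [σ]⟩
  simp only [_root_.map_mul, SemidirectProduct.mul_left, σ_right, toAdd_mul]
  rfl

end IsCrossedHom

end CrossedHom

/-- The relation module `R / [R, R]` of a group homomorphism `p` with kernel `R`, written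
additively. Its `ℤG`-module structure is not part of the definition; it is specified by
`RelationModule.IsConjugation`. -/
abbrev RelationModule {H G : Type*} [Group H] [Group G] (p : H →* G) : Type _ :=
  Additive (Abelianization p.ker)

namespace RelationModule

variable {H K G : Type*} [Group H] [Group K] [Group G] {p : H →* G} {q : K →* G}

/-- The class of a relation in the relation module. -/
def mk (r : p.ker) : RelationModule p :=
  Additive.ofMul (Abelianization.of r)

theorem mk_one : mk (1 : p.ker) = 0 :=
  rfl

theorem mk_mul (r t : p.ker) : mk (r * t) = mk r + mk t :=
  rfl

theorem mk_surjective : Function.Surjective (mk : p.ker → RelationModule p) :=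
  QuotientGroup.mk_surjective

/-- The map of kernels induced by a homomorphism `f : H →* K` over `G`. -/
def kerMap (f : H →* K) (hf : q.comp f = p) : p.ker →* q.ker :=
  (f.comp p.ker.subtype).codRestrict q.ker fun r => by
    rw [MonoidHom.mem_ker, ← MonoidHom.comp_apply, ← MonoidHom.comp_assoc, hf]
    exact r.2

theorem coe_kerMap (f : H →* K) (hf : q.comp f = p) (r : p.ker) : (kerMap f hf r : K) = f r :=
  rfl

theorem mul_inv_mem_ker {e : H →* H} (he : p.comp e = p) (u : H) : u * (e u)⁻¹ ∈ p.ker := by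
  rw [MonoidHom.mem_ker, map_mul, map_inv, ← MonoidHom.comp_apply, he, mul_inv_cancel]

/-- The class of `u (e u)⁻¹`, measuring how far an endomorphism `e` of `H` over `G` moves `u`. -/
def displacement (e : H →* H) (he : p.comp e = p) (u : H) : RelationModule p :=
  mk ⟨u * (e u)⁻¹, mul_inv_mem_ker he u⟩

theorem displacement_eq_zero {e : H →* H} (he : p.comp e = p) {u : H} (hu : e u = u) :
    displacement e he u = 0 := by
  rw [← mk_one]
  exact congrArg mk (Subtype.ext (by simp [hu]))

theorem mk_eq_mk_kerMap_add_displacement {e : H →* H} (he : p.comp e = p) (r : p.ker) :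
    mk r = mk (kerMap e he r) + displacement e he r := by
  rw [displacement, add_comm, ← mk_mul]
  exact congrArg mk (Subtype.ext (by simp [coe_kerMap]))

/-- The action of `ℤG` on the relation module is induced by conjugation. -/
def IsConjugation (p : H →* G) [Module (MonoidAlgebra ℤ G) (RelationModule p)] : Prop :=
  ∀ (f : H) (r r' : p.ker), (r' : H) = f * r * f⁻¹ →
    MonoidAlgebra.of ℤ G (p f) • mk r = mk r'

/-- The homomorphism `H → ℤG` induced by `p`, through which `H` acts on `ℤG`-modules. -/
noncomputable abbrev groupRingHom (p : H →* G) : H →* MonoidAlgebra ℤ G :=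
  (MonoidAlgebra.of ℤ G).comp p

theorem groupRingHom_eq_one (r : p.ker) : groupRingHom p r = 1 := by
  rw [MonoidHom.comp_apply, r.2, map_one]

variable [Module (MonoidAlgebra ℤ G) (RelationModule p)]
  [Module (MonoidAlgebra ℤ G) (RelationModule q)]
  {N : Type*} [AddCommGroup N] [Module (MonoidAlgebra ℤ G) N]

theorem linearMap_ext {f f' : RelationModule p →ₗ[MonoidAlgebra ℤ G] N}
    (h : ∀ r, f (mk r) = f' (mk r)) : f = f' :=
  LinearMap.ext <| mk_surjective.forall.2 h

theorem exists_linearMap (hp : Function.Surjective p) (hconj : IsConjugation p)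
    (φ : p.ker → N) (hmul : ∀ r t, φ (r * t) = φ r + φ t)
    (hφ : ∀ (f : H) (r r' : p.ker), (r' : H) = f * r * f⁻¹ → φ r' = groupRingHom p f • φ r) :
    ∃ Φ : RelationModule p →ₗ[MonoidAlgebra ℤ G] N, ∀ r, Φ (mk r) = φ r := by
  let Φ : RelationModule p →+ N := MonoidHom.toAdditiveLeft <| Abelianization.lift <|
    MonoidHom.mk' (fun r => Multiplicative.ofAdd (φ r)) hmul
  have Φ_mk (r : p.ker) : Φ (mk r) = φ r := rfl
  refine ⟨MonoidAlgebra.equivariantOfLinearOfComm Φ.toIntLinearMap fun g m => ?_, Φ_mk⟩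
  obtain ⟨f, rfl⟩ := hp g
  obtain ⟨r, rfl⟩ := mk_surjective m
  let r' : p.ker := ⟨f * r * f⁻¹, p.normal_ker.conj_mem _ r.2 f⟩
  calc Φ (MonoidAlgebra.of ℤ G (p f) • mk r)
      _ = Φ (mk r') := by rw [hconj f r r' rfl]
      _ = groupRingHom p f • Φ (mk r) := by rw [Φ_mk, Φ_mk, hφ f r r' rfl]

theorem exists_linearMap_kerMap (hp : Function.Surjective p) (hpconj : IsConjugation p)
    (hqconj : IsConjugation q) (f : H →* K) (hf : q.comp f = p) :
    ∃ Φ : RelationModule p →ₗ[MonoidAlgebra ℤ G] RelationModule q,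
      ∀ r, Φ (mk r) = mk (kerMap f hf r) := by
  refine exists_linearMap hp hpconj _ (fun r t => by rw [map_mul, mk_mul]) fun u r r' h => ?_
  have hconj_map : (kerMap f hf r' : K) = f u * kerMap f hf r * (f u)⁻¹ := by
    rw [coe_kerMap, coe_kerMap, h, map_mul, map_mul, map_inv]
  have groupRingHom_u : groupRingHom p u = MonoidAlgebra.of ℤ G (q (f u)) := by
    rw [← hf, MonoidHom.comp_apply, MonoidHom.comp_apply]
  rw [groupRingHom_u, hqconj (f u) _ _ hconj_map]

theorem exists_linearMap_isCrossedHom (hp : Function.Surjective p) (hconj : IsConjugation p)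
    {d : H → N} (hd : IsCrossedHom (groupRingHom p) d) :
    ∃ Φ : RelationModule p →ₗ[MonoidAlgebra ℤ G] N, ∀ r : p.ker, Φ (mk r) = d r := by
  refine exists_linearMap hp hconj (fun r => d r) (fun r t => ?_) fun f r r' h => ?_
  · rw [Subgroup.coe_mul, hd, groupRingHom_eq_one, one_smul]
  · have hr' := groupRingHom_eq_one r'
    rw [h] at hr'
    rw [h, hd.map_mul_inv, hr', hd, one_smul, add_sub_cancel_left]

theorem isCrossedHom_displacement (hconj : IsConjugation p) {e : H →* H} (he : p.comp e = p) :
    IsCrossedHom (groupRingHom p) (displacement e he) := fun u v => by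
  let conj : p.ker :=
    ⟨u * (v * (e v)⁻¹) * u⁻¹, p.normal_ker.conj_mem _ (mul_inv_mem_ker he v) u⟩
  calc displacement e he (u * v)
      _ = mk conj + displacement e he u := by
        rw [displacement, displacement, ← mk_mul]
        exact congrArg mk (Subtype.ext (by simp [conj, mul_assoc]))
      _ = displacement e he u + groupRingHom p u • displacement e he v := by
        rw [add_comm, ← hconj u ⟨_, mul_inv_mem_ker he v⟩ conj rfl]
        rfl

theorem nonempty_linearEquiv_prod_of_retraction
    (hp : Function.Surjective p) (hpconj : IsConjugation p) (hqconj : IsConjugation q)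
    {s : H →* K} {ρ : K →* H} (hs : q.comp s = p)
    (hρs : ρ.comp s = MonoidHom.id H) (hsρ : q.comp (s.comp ρ) = q)
    {d : K → N} (hd : IsCrossedHom (groupRingHom q) d) (hds : ∀ u, d (s u) = 0)
    (hspan : Submodule.span (MonoidAlgebra ℤ G) (Set.range d) = ⊤)
    (j : N →ₗ[MonoidAlgebra ℤ G] RelationModule q)
    (hj : ∀ u, j (d u) = displacement (s.comp ρ) hsρ u) :
    Nonempty (RelationModule q ≃ₗ[MonoidAlgebra ℤ G] RelationModule p × N) := by
  have hq : Function.Surjective q := by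
    refine Function.Surjective.of_comp (g := s) ?_
    rwa [← MonoidHom.coe_comp, hs]
  have hρ : p.comp ρ = q := by rw [← hs, MonoidHom.comp_assoc, hsρ]
  have ρ_s (u : H) : ρ (s u) = u := DFunLike.congr_fun hρs u
  obtain ⟨sM, sM_mk⟩ := exists_linearMap_kerMap hp hpconj hqconj s hs
  obtain ⟨ρM, ρM_mk⟩ := exists_linearMap_kerMap hq hqconj hpconj ρ hρ
  obtain ⟨dM, dM_mk⟩ := exists_linearMap_isCrossedHom hq hqconj hd
  have ρM_sM : ρM ∘ₗ sM = LinearMap.id := linearMap_ext fun r => by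
    rw [LinearMap.comp_apply, sM_mk, ρM_mk]
    exact congrArg mk (Subtype.ext (ρ_s r))
  have dM_sM : dM ∘ₗ sM = 0 := linearMap_ext fun r => by
    rw [LinearMap.comp_apply, sM_mk, dM_mk, coe_kerMap, hds, LinearMap.zero_apply]
  have ρM_j : ρM ∘ₗ j = 0 := LinearMap.ext_on_range hspan fun u => by
    rw [LinearMap.comp_apply, hj, displacement, ρM_mk, LinearMap.zero_apply, ← mk_one]
    exact congrArg mk (Subtype.ext (by simp [coe_kerMap, ρ_s]))
  have dM_j : dM ∘ₗ j = LinearMap.id := LinearMap.ext_on_range hspan fun u => by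
    rw [LinearMap.comp_apply, hj, displacement, dM_mk, hd.map_mul_inv, MonoidHom.comp_apply s ρ,
      hds, smul_zero, sub_zero, LinearMap.id_apply]
  have sM_ρM_add_j_dM : sM ∘ₗ ρM + j ∘ₗ dM = LinearMap.id := linearMap_ext fun r => by
    rw [LinearMap.add_apply, LinearMap.comp_apply, LinearMap.comp_apply, ρM_mk, sM_mk, dM_mk, hj]
    exact (mk_eq_mk_kerMap_add_displacement hsρ r).symm
  refine ⟨LinearEquiv.ofLinearMap (ρM.prod dM) (sM.coprod j) ?_ ?_⟩
  · rw [LinearMap.prod_comp, LinearMap.comp_coprod, LinearMap.comp_coprod, ρM_sM, ρM_j, dM_sM, dM_j]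
    ext <;> simp
  · rw [LinearMap.coprod_comp_prod, sM_ρM_add_j_dM]

end RelationModule

open RelationModule in
theorem relationModule_add_redundant_generator_general
    {α β G : Type*} [Group G] (π : FreeGroup α →* G) (hπ : Function.Surjective π)
    (πhat : FreeGroup (α ⊕ β) →* G)
    (hπhat : ∀ a : α, πhat (FreeGroup.of (Sum.inl a)) = π (FreeGroup.of a))
    [Module (MonoidAlgebra ℤ G) (RelationModule π)] (hact : IsConjugation π)
    [Module (MonoidAlgebra ℤ G) (RelationModule πhat)] (hacthat : IsConjugation πhat) :
    Nonempty (RelationModule πhat ≃ₗ[MonoidAlgebra ℤ G]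
      RelationModule π × (β →₀ MonoidAlgebra ℤ G)) := by
  choose w hw using fun b => hπ (πhat (FreeGroup.of (Sum.inr b)))
  let s : FreeGroup α →* FreeGroup (α ⊕ β) := FreeGroup.map Sum.inl
  let ρ : FreeGroup (α ⊕ β) →* FreeGroup α := FreeGroup.lift (Sum.elim FreeGroup.of w)
  have hs : πhat.comp s = π := by ext a; simp [s, hπhat]
  have hρ : π.comp ρ = πhat := by ext (a | b) <;> simp [ρ, hπhat, hw]
  have hρs : ρ.comp s = MonoidHom.id _ := by ext a; simp [ρ, s]
  have hsρ : πhat.comp (s.comp ρ) = πhat := by rw [← MonoidHom.comp_assoc, hs, hρ]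
  obtain ⟨d, hd, d_of⟩ := IsCrossedHom.exists_freeGroup_of_eq (groupRingHom πhat)
    (N := β →₀ MonoidAlgebra ℤ G) (Sum.elim 0 fun b => Finsupp.single b 1)
  let j := Finsupp.linearCombination (MonoidAlgebra ℤ G) fun b =>
    displacement (s.comp ρ) hsρ (FreeGroup.of (Sum.inr b))
  have hds : ∀ u, d (s u) = 0 :=
    (hd.comp_monoidHom s).freeGroup_ext (.zero _) fun a => by simp [s, d_of]
  have hspan : Submodule.span (MonoidAlgebra ℤ G) (Set.range d) = ⊤ := by
    rw [eq_top_iff, ← Finsupp.basisSingleOne.span_eq]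
    exact Submodule.span_mono (Set.range_subset_iff.2 fun b =>
      ⟨FreeGroup.of (Sum.inr b), by simp [d_of]⟩)
  have hj : ∀ u, j (d u) = displacement (s.comp ρ) hsρ u := by
    refine (hd.linearMap_comp j).freeGroup_ext (isCrossedHom_displacement hacthat hsρ) ?_
    rintro (a | b)
    · simp [d_of, displacement_eq_zero hsρ (u := FreeGroup.of (Sum.inl a)) (by simp [ρ, s])]
    · simp [d_of, j]
  exact nonempty_linearEquiv_prod_of_retraction hπ hact hacthat hs hρs hsρ hd hds hspan j hj

/-- Let `G` be generated by a family `x` via `π : F(x) → G`, let `g ∈ G`, and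
extend to `π̂ : F(x ⊔ {y}) → G` with `π̂(y) = g`.  Then there is a
`ℤG`-isomorphism `M(G, x ∪ {y}) ≅ M(G, x) ⊕ ℤG` of relation modules (where
`M(G,x) = ker π / [ker π, ker π]` with `G` acting by conjugation). -/
theorem relationModule_add_redundant_generator
    {α : Type} {G : Type} [Group G]
    (π : FreeGroup α →* G) (hπ : Function.Surjective π) (g : G)
    (πhat : FreeGroup (α ⊕ Unit) →* G)
    (hπhat : ∀ a : α, πhat (FreeGroup.of (Sum.inl a)) = π (FreeGroup.of a))
    (hπhaty : πhat (FreeGroup.of (Sum.inr ())) = g)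
    [Module (MonoidAlgebra ℤ G) (Additive (Abelianization ↥π.ker))]
    (hact : ∀ (f : FreeGroup α) (r r' : ↥π.ker), (r' : FreeGroup α) = f * ↑r * f⁻¹ →
      MonoidAlgebra.of ℤ G (π f) • Additive.ofMul (Abelianization.of r) =
        Additive.ofMul (Abelianization.of r'))
    [Module (MonoidAlgebra ℤ G) (Additive (Abelianization ↥πhat.ker))]
    (hacthat : ∀ (f : FreeGroup (α ⊕ Unit)) (r r' : ↥πhat.ker),
      (r' : FreeGroup (α ⊕ Unit)) = f * ↑r * f⁻¹ →
      MonoidAlgebra.of ℤ G (πhat f) • Additive.ofMul (Abelianization.of r) =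
        Additive.ofMul (Abelianization.of r')) :
    Nonempty (Additive (Abelianization ↥πhat.ker) ≃ₗ[MonoidAlgebra ℤ G]
      (Additive (Abelianization ↥π.ker) × MonoidAlgebra ℤ G)) := by
  obtain ⟨e⟩ := relationModule_add_redundant_generator_general π hπ πhat hπhat hact hacthat
  exact ⟨e.trans ((LinearEquiv.refl _ _).prodCongr (Finsupp.uniqueLinearEquiv _ _ ()))⟩
end

section
/- Let F = F(a ⊔ b) be the free group on the disjoint union of two families a and b, and let π : F → G be an epimorphism of groups. Assume that π restricted to the free subgroup F(b) generated by b is injective with image a subgroup Q (so Q is free with basis the image of b), and that G is the internal semidirect product H ⋊ Q, where H is the normal closure of π(a) in G. Let ā = { f a f⁻¹ : f ∈ F, a ∈ a }, so that the subgroup F(ā) generated by ā is the normal closure of a in F and is free with basis ā. Then the relation subgroup R = ker π is contained in F(ā) and equals the kernel of the restriction π′ : F(ā) → H; consequently the relation modules M(G, a ∪ b) and M(H, ā) coincide, and M(H, ā) is a ℤG-module with G acting by conjugation: (fR)·(s[R,R]) = (f s f⁻¹)[R,R] for f ∈ F, s ∈ R. -/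
/-!
Killing the generators `a` retracts `F(a ⊔ b)` onto `F(b)`, and the kernel of this retraction `p`
is the normal closure `N` of `a`. If `π w = 1`, then `π` sends `w` and its `F(b)`-part `p w` to the
same coset of `π N = H`, so `π (p w) ∈ H ⊓ Q = ⊥`, whence `p w = 1` by injectivity of `π` on `F(b)`;
that is, `w ∈ N`. For the module structure, `F` acts on `R/[R,R]` by conjugation, and `R` acts
trivially because inner automorphisms do so on an abelianization; the action therefore descends
to `F/R = G` and extends linearly to `ℤG`.
-/

section Retraction

variable {F B G : Type*} [Group F] [Group B] [Group G]

theorem ker_le_ker_of_disjoint_map_ker {p : F →* B} {s : B →* F} (hps : Function.LeftInverse p s)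
    {π : F →* G} (hinj : Function.Injective (π.comp s))
    (hdisj : Disjoint (p.ker.map π) (π.comp s).range) : π.ker ≤ p.ker := by
  intro w hw
  have hpart : s (p w) * w⁻¹ ∈ p.ker := by
    rw [MonoidHom.mem_ker, map_mul, map_inv, hps, mul_inv_cancel]
  have himage : π (s (p w) * w⁻¹) = π.comp s (p w) := by
    rw [map_mul, map_inv, MonoidHom.mem_ker.1 hw, inv_one, mul_one, MonoidHom.comp_apply]
  have htrivial : π.comp s (p w) = 1 :=
    Subgroup.disjoint_def.1 hdisj ⟨_, hpart, himage⟩ ⟨p w, rfl⟩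
  exact (map_eq_one_iff _ hinj).1 htrivial

end Retraction

section FreeGroup

variable (α β : Type*)

/-- The retraction `F(a ⊔ b) → F(b)` of free groups which kills the generators in `a` and fixes
those in `b`. -/
def freeGroupKillInl : FreeGroup (α ⊕ β) →* FreeGroup β :=
  FreeGroup.lift (Sum.elim (fun _ => 1) FreeGroup.of)

variable {α β}

@[simp]
theorem freeGroupKillInl_of_inl (a : α) : freeGroupKillInl α β (FreeGroup.of (Sum.inl a)) = 1 :=
  FreeGroup.lift_apply_of

@[simp]
theorem freeGroupKillInl_of_inr (b : β) :
    freeGroupKillInl α β (FreeGroup.of (Sum.inr b)) = FreeGroup.of b :=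
  FreeGroup.lift_apply_of

theorem freeGroupKillInl_leftInverse :
    Function.LeftInverse (freeGroupKillInl α β) (FreeGroup.map Sum.inr) := by
  have hid : (freeGroupKillInl α β).comp (FreeGroup.map Sum.inr) = MonoidHom.id _ := by
    ext b
    simp
  exact DFunLike.congr_fun hid

theorem ker_freeGroupKillInl :
    (freeGroupKillInl α β).ker =
      Subgroup.normalClosure (Set.range fun a : α => FreeGroup.of (Sum.inl a)) := by
  set N : Subgroup (FreeGroup (α ⊕ β)) :=
    Subgroup.normalClosure (Set.range fun a : α => FreeGroup.of (Sum.inl a))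
  have hmod : (QuotientGroup.mk' N).comp ((FreeGroup.map Sum.inr).comp (freeGroupKillInl α β)) =
      QuotientGroup.mk' N := by
    ext (a | b)
    · have ha : (FreeGroup.of (Sum.inl a) : FreeGroup (α ⊕ β)) ∈ N :=
        Subgroup.subset_normalClosure ⟨a, rfl⟩
      simpa using ((QuotientGroup.eq_one_iff _).2 ha).symm
    · simp
  apply le_antisymm
  · intro w hw
    have hw_mod := DFunLike.congr_fun hmod w
    rw [MonoidHom.comp_apply, MonoidHom.comp_apply, MonoidHom.mem_ker.1 hw, map_one, map_one]
      at hw_mod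
    exact (QuotientGroup.eq_one_iff w).1 hw_mod.symm
  · refine Subgroup.normalClosure_le_normal ?_
    rintro _ ⟨a, rfl⟩
    exact freeGroupKillInl_of_inl a

end FreeGroup

section ConjugationAction

variable {F : Type*} [Group F] (R : Subgroup F) [R.Normal]

/-- The conjugation action of a group `F` on the abelianization `R/[R,R]` of a normal subgroup,
written additively. -/
def conjAbelianization : F →* AddMonoid.End (Additive (Abelianization R)) where
  toFun f := (Abelianization.map (MulAut.conjNormal f : MulAut R).toMonoidHom).toAdditive
  map_one' := by
    rw [map_one]
    exact congrArg MonoidHom.toAdditive Abelianization.map_id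
  map_mul' f g := by
    rw [map_mul]
    exact congrArg MonoidHom.toAdditive (Abelianization.map_comp
      (MulAut.conjNormal (H := R) g).toMonoidHom (MulAut.conjNormal (H := R) f).toMonoidHom).symm

theorem conjAbelianization_ofMul_of (f : F) (r : R) :
    conjAbelianization R f (Additive.ofMul (Abelianization.of r)) =
      Additive.ofMul (Abelianization.of (MulAut.conjNormal f r)) :=
  rfl

theorem le_ker_conjAbelianization : R ≤ (conjAbelianization R).ker := by
  intro f hf
  have hinner : Abelianization.map (MulAut.conjNormal f : MulAut R).toMonoidHom =
      MonoidHom.id (Abelianization R) := by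
    ext r
    have hconj : MulAut.conjNormal f r = ⟨f, hf⟩ * r * ⟨f, hf⟩⁻¹ := Subtype.ext (by simp)
    simp [hconj]
  exact congrArg MonoidHom.toAdditive hinner

end ConjugationAction

section RelationModule

variable {F G : Type*} [Group F] [Group G] {π : F →* G}

/-- The conjugation action of `G` on the relation module `R/[R,R]` of an epimorphism `π : F → G`
with kernel `R`, obtained from that of `F` through the identification `F/R ≃ G`. -/
noncomputable def relationModuleHom (hπ : Function.Surjective π) :
    G →* AddMonoid.End (Additive (Abelianization π.ker)) :=
  (QuotientGroup.lift π.ker (conjAbelianization π.ker) (le_ker_conjAbelianization π.ker)).comp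
    (QuotientGroup.quotientKerEquivOfSurjective π hπ).symm.toMonoidHom

theorem relationModuleHom_apply (hπ : Function.Surjective π) (f : F) :
    relationModuleHom hπ (π f) = conjAbelianization π.ker f := by
  have hsymm : (QuotientGroup.quotientKerEquivOfSurjective π hπ).symm (π f) = f :=
    (MulEquiv.symm_apply_eq _).2 rfl
  exact congrArg (QuotientGroup.lift _ _ (le_ker_conjAbelianization π.ker)) hsymm

/-- The `ℤG`-module structure on the relation module `R/[R,R]` of an epimorphism `π : F → G` with
kernel `R`, encoded as a ring homomorphism from `ℤG` to the additive endomorphisms. -/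
noncomputable def relationModuleAction (hπ : Function.Surjective π) :
    MonoidAlgebra ℤ G →+* AddMonoid.End (Additive (Abelianization π.ker)) :=
  (MonoidAlgebra.lift ℤ _ G (relationModuleHom hπ)).toRingHom

theorem relationModuleAction_of (hπ : Function.Surjective π) (g : G) :
    relationModuleAction hπ (MonoidAlgebra.of ℤ G g) = relationModuleHom hπ g :=
  MonoidAlgebra.lift_of _ _

theorem relationModuleAction_of_ofMul_of (hπ : Function.Surjective π) (f : F) {r r' : π.ker}
    (hr : (r' : F) = f * r * f⁻¹) :
    relationModuleAction hπ (MonoidAlgebra.of ℤ G (π f)) (Additive.ofMul (Abelianization.of r)) =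
      Additive.ofMul (Abelianization.of r') := by
  have hconj : MulAut.conjNormal f r = r' := Subtype.ext hr.symm
  rw [relationModuleAction_of, relationModuleHom_apply, conjAbelianization_ofMul_of, hconj]

end RelationModule

/-- Let `F = F(a ⊔ b)` be free on the disjoint union of two families, let
`π : F → G` be an epimorphism which is injective on the free subgroup `F(b)`
(with image `Q`), and suppose `G` is the internal semidirect product `H ⋊ Q`,
where `H` is the normal closure of `π(a)` in `G` (i.e. `H ⊓ Q = ⊥` and
`H ⊔ Q = ⊤`, `H` being normal).  Let `N = F(ā)` be the normal closure of `a`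
in `F`.  Then the relation subgroup `R = ker π` is contained in `N`; `π` maps
`N` onto `H`, so `R` is also the kernel of the restriction `π′ : F(ā) → H`
(hence `M(G, a ∪ b) = M(H, ā)`); and `M(H, ā) = R/[R,R]` carries a
`ℤG`-module structure with `G` acting by conjugation:
`(π f) • (s[R,R]) = (f s f⁻¹)[R,R]`. -/
theorem relation_module_of_semidirect_decomposition
    {α β : Type} {G : Type} [Group G]
    (π : FreeGroup (α ⊕ β) →* G) (hπ : Function.Surjective π)
    (hinj : Function.Injective (π.comp (FreeGroup.map Sum.inr)))
    (Q : Subgroup G) (hQ : Q = (π.comp (FreeGroup.map Sum.inr)).range)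
    (H : Subgroup G)
    (hH : H = Subgroup.normalClosure (Set.range fun a : α => π (FreeGroup.of (Sum.inl a))))
    (hdisj : H ⊓ Q = ⊥) (hjoin : H ⊔ Q = ⊤)
    (N : Subgroup (FreeGroup (α ⊕ β)))
    (hN : N = Subgroup.normalClosure (Set.range fun a : α => FreeGroup.of (Sum.inl a))) :
    π.ker ≤ N ∧
    (∀ w ∈ N, π w ∈ H) ∧
    (∀ h ∈ H, ∃ w ∈ N, π w = h) ∧
    ∃ ρ : MonoidAlgebra ℤ G →+* AddMonoid.End (Additive (Abelianization ↥π.ker)),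
      ∀ (f : FreeGroup (α ⊕ β)) (r r' : ↥π.ker),
        (r' : FreeGroup (α ⊕ β)) = f * ↑r * f⁻¹ →
        ρ (MonoidAlgebra.of ℤ G (π f)) (Additive.ofMul (Abelianization.of r)) =
          Additive.ofMul (Abelianization.of r') := by
  have hmap : N.map π = H := by
    rw [hN, hH, Subgroup.map_normalClosure _ π hπ, ← Set.range_comp]
    rfl
  have hker : (freeGroupKillInl α β).ker = N := ker_freeGroupKillInl.trans hN.symm
  refine ⟨?_, fun w hw => hmap ▸ Subgroup.mem_map_of_mem π hw, fun h hh => ?_,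
    relationModuleAction hπ, fun f r r' => relationModuleAction_of_ofMul_of hπ f⟩
  · rw [← hker]
    refine ker_le_ker_of_disjoint_map_ker freeGroupKillInl_leftInverse hinj ?_
    rw [hker, hmap, ← hQ]
    exact disjoint_iff.2 hdisj
  · rwa [← hmap] at hh
end

section
/- Let G = ⟨x, y | x y² x⁻¹ = y³⟩. Then the presented group ⟨ x, y, x′, y′ | x y² x⁻¹ = y³, x′ y′² x′⁻¹ = y′³, x = x′, y⁴ = y′⁴ ⟩ is isomorphic to G, via the map sending x ↦ x, y ↦ y, x′ ↦ x, y′ ↦ y. -/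
/-- The relators `x y² x⁻¹ y⁻³`, `x′ y′² x′⁻¹ y′⁻³`, `x x′⁻¹`, `y⁴ y′⁻⁴` in the
free group on four generators `x = 0`, `y = 1`, `x′ = 2`, `y′ = 3`. -/
def doubledRels : Set (FreeGroup (Fin 4)) :=
  {FreeGroup.of 0 * FreeGroup.of 1 ^ 2 * (FreeGroup.of 0)⁻¹ * (FreeGroup.of 1 ^ 3)⁻¹,
   FreeGroup.of 2 * FreeGroup.of 3 ^ 2 * (FreeGroup.of 2)⁻¹ * (FreeGroup.of 3 ^ 3)⁻¹,
   FreeGroup.of 0 * (FreeGroup.of 2)⁻¹,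
   FreeGroup.of 1 ^ 4 * (FreeGroup.of 3 ^ 4)⁻¹}

/-!
Let `m` and `n` be coprime and suppose that `x` conjugates `y ^ m` to `y ^ n` and `z ^ m` to
`z ^ n`. If `y` and `z` have the same `(m * k)`-th power, then raising the two relations to the
power `k` shows that they have the same `(n * k)`-th power, hence by Bézout the same `k`-th power.
The same descent removes factors of `n`, so equality of the `k`-th powers for any `k` dividing a
power of `m * n` forces `y = z`. In the doubled presentation this makes the second pair of
generators redundant; for `m = 2`, `n = 3` the exponent `k = 4` divides `6 ^ 2`.
-/

section Descent

variable {H : Type*} [Group H] {x y z : H} {m n k : ℤ}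

theorem zpow_mul_eq_of_semiconjBy (hy : SemiconjBy x (y ^ m) (y ^ n))
    (hz : SemiconjBy x (z ^ m) (z ^ n)) (h : y ^ (m * k) = z ^ (m * k)) :
    y ^ (n * k) = z ^ (n * k) := by
  have hyk : SemiconjBy x (y ^ (m * k)) (y ^ (n * k)) := by
    simpa only [zpow_mul] using hy.zpow_right k
  have hzk : SemiconjBy x (z ^ (m * k)) (z ^ (n * k)) := by
    simpa only [zpow_mul] using hz.zpow_right k
  apply mul_right_cancel (b := x)
  rw [← hyk.eq, h, hzk.eq]

theorem zpow_eq_of_zpow_mul_eq_of_isCoprime (hmn : IsCoprime m n)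
    (hm : y ^ (m * k) = z ^ (m * k)) (hn : y ^ (n * k) = z ^ (n * k)) : y ^ k = z ^ k := by
  obtain ⟨a, b, hab⟩ := hmn
  have hk : k = m * k * a + n * k * b := by linear_combination -k * hab
  calc
    y ^ k = (y ^ (m * k)) ^ a * (y ^ (n * k)) ^ b := by
      rw [← zpow_mul, ← zpow_mul, ← zpow_add, ← hk]
    _ = (z ^ (m * k)) ^ a * (z ^ (n * k)) ^ b := by rw [hm, hn]
    _ = z ^ k := by rw [← zpow_mul, ← zpow_mul, ← zpow_add, ← hk]

theorem zpow_eq_of_semiconjBy_of_zpow_mul_eq (hmn : IsCoprime m n)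
    (hy : SemiconjBy x (y ^ m) (y ^ n)) (hz : SemiconjBy x (z ^ m) (z ^ n))
    (h : y ^ (m * k) = z ^ (m * k)) : y ^ k = z ^ k :=
  zpow_eq_of_zpow_mul_eq_of_isCoprime hmn h (zpow_mul_eq_of_semiconjBy hy hz h)

theorem eq_of_semiconjBy_of_zpow_mul_pow_eq (hmn : IsCoprime m n)
    (hy : SemiconjBy x (y ^ m) (y ^ n)) (hz : SemiconjBy x (z ^ m) (z ^ n)) {j : ℕ}
    (h : y ^ ((m * n) ^ j) = z ^ ((m * n) ^ j)) : y = z := by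
  induction j with
  | zero => simpa using h
  | succ j ih =>
    rw [pow_succ', mul_assoc] at h
    have hn : y ^ (n * (m * n) ^ j) = z ^ (n * (m * n) ^ j) :=
      zpow_eq_of_semiconjBy_of_zpow_mul_eq hmn hy hz h
    exact ih (zpow_eq_of_semiconjBy_of_zpow_mul_eq hmn.symm hy.inv_symm_left hz.inv_symm_left hn)

theorem eq_of_semiconjBy_of_zpow_eq_of_dvd (hmn : IsCoprime m n)
    (hy : SemiconjBy x (y ^ m) (y ^ n)) (hz : SemiconjBy x (z ^ m) (z ^ n)) {j : ℕ}
    (hk : k ∣ (m * n) ^ j) (h : y ^ k = z ^ k) : y = z := by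
  obtain ⟨c, hc⟩ := hk
  apply eq_of_semiconjBy_of_zpow_mul_pow_eq hmn hy hz (j := j)
  rw [hc, zpow_mul, zpow_mul, h]

end Descent

/-- The Baumslag–Solitar relator `a bᵐ a⁻¹ b⁻ⁿ` on the generators `a`, `b` of a free group. -/
def bsRelator {α : Type*} (m n : ℤ) (a b : α) : FreeGroup α :=
  FreeGroup.of a * FreeGroup.of b ^ m * (FreeGroup.of a)⁻¹ * (FreeGroup.of b ^ n)⁻¹

theorem map_bsRelator_eq_one_iff {α H : Type*} [Group H] (φ : FreeGroup α →* H) (m n : ℤ)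
    (a b : α) :
    φ (bsRelator m n a b) = 1 ↔
      SemiconjBy (φ (FreeGroup.of a)) (φ (FreeGroup.of b) ^ m) (φ (FreeGroup.of b) ^ n) := by
  simp only [bsRelator, map_mul, map_inv, map_zpow]
  rw [mul_inv_eq_one, mul_inv_eq_iff_eq_mul, SemiconjBy]

theorem semiconjBy_of_bsRelator_mem {α : Type*} {rels : Set (FreeGroup α)} {m n : ℤ} {a b : α}
    (h : bsRelator m n a b ∈ rels) :
    SemiconjBy (PresentedGroup.of a : PresentedGroup rels) (PresentedGroup.of b ^ m)
      (PresentedGroup.of b ^ n) :=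
  (map_bsRelator_eq_one_iff (PresentedGroup.mk rels) m n a b).mp (PresentedGroup.one_of_mem h)

/-- The relator presenting the Baumslag–Solitar group `BS(m, n)`, with generators `x = 0` and
`y = 1`. -/
def baumslagSolitarRels (m n : ℤ) : Set (FreeGroup (Fin 2)) :=
  {bsRelator m n 0 1}

/-- Two copies of the presentation of `BS(m, n)`, with generators `x = 0`, `y = 1` and `x′ = 2`,
`y′ = 3`, together with the identifications `x = x′` and `yᵏ = y′ᵏ`. -/
def doubledBaumslagSolitarRels (m n k : ℤ) : Set (FreeGroup (Fin 4)) :=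
  {bsRelator m n 0 1, bsRelator m n 2 3, FreeGroup.of 0 * (FreeGroup.of 2)⁻¹,
    FreeGroup.of 1 ^ k * (FreeGroup.of 3 ^ k)⁻¹}

theorem bsRels_eq_baumslagSolitarRels : bsRels = baumslagSolitarRels 2 3 :=
  rfl

theorem doubledRels_eq_doubledBaumslagSolitarRels :
    doubledRels = doubledBaumslagSolitarRels 2 3 4 :=
  rfl

section DoubledPresentation

open PresentedGroup

variable {m n k : ℤ}

theorem baumslagSolitar_semiconjBy :
    SemiconjBy (of 0 : PresentedGroup (baumslagSolitarRels m n)) (of 1 ^ m) (of 1 ^ n) :=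
  semiconjBy_of_bsRelator_mem rfl

theorem doubled_semiconjBy_left :
    SemiconjBy (of 0 : PresentedGroup (doubledBaumslagSolitarRels m n k)) (of 1 ^ m) (of 1 ^ n) :=
  semiconjBy_of_bsRelator_mem (by simp [doubledBaumslagSolitarRels])

theorem doubled_semiconjBy_right :
    SemiconjBy (of 2 : PresentedGroup (doubledBaumslagSolitarRels m n k)) (of 3 ^ m) (of 3 ^ n) :=
  semiconjBy_of_bsRelator_mem (by simp [doubledBaumslagSolitarRels])

theorem doubled_of_zero_eq_of_two :
    (of 0 : PresentedGroup (doubledBaumslagSolitarRels m n k)) = of 2 :=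
  mk_eq_mk_of_mul_inv_mem (by simp [doubledBaumslagSolitarRels])

theorem doubled_of_one_zpow_eq_of_three_zpow :
    (of 1 : PresentedGroup (doubledBaumslagSolitarRels m n k)) ^ k = of 3 ^ k :=
  mk_eq_mk_of_mul_inv_mem (rels := doubledBaumslagSolitarRels m n k)
    (x := FreeGroup.of 1 ^ k) (y := FreeGroup.of 3 ^ k) (by simp [doubledBaumslagSolitarRels])

theorem doubled_of_one_eq_of_three {j : ℕ} (hmn : IsCoprime m n) (hk : k ∣ (m * n) ^ j) :
    (of 1 : PresentedGroup (doubledBaumslagSolitarRels m n k)) = of 3 :=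
  eq_of_semiconjBy_of_zpow_eq_of_dvd hmn doubled_semiconjBy_left
    (doubled_of_zero_eq_of_two ▸ doubled_semiconjBy_right) hk doubled_of_one_zpow_eq_of_three_zpow

/-- The folding homomorphism `x, x′ ↦ x`, `y, y′ ↦ y` from the doubled presentation onto
`BS(m, n)`. -/
def foldHom (m n k : ℤ) :
    PresentedGroup (doubledBaumslagSolitarRels m n k) →*
      PresentedGroup (baumslagSolitarRels m n) :=
  toGroup (f := ![of 0, of 1, of 0, of 1]) <| by
    rintro r (rfl | rfl | rfl | rfl)
    · exact (map_bsRelator_eq_one_iff _ _ _ _ _).mpr (by simpa using baumslagSolitar_semiconjBy)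
    · exact (map_bsRelator_eq_one_iff _ _ _ _ _).mpr (by simpa using baumslagSolitar_semiconjBy)
    · simp
    · simp

/-- The homomorphism `x ↦ x`, `y ↦ y` from `BS(m, n)` to the first copy in the doubled
presentation. -/
def firstCopyHom (m n k : ℤ) :
    PresentedGroup (baumslagSolitarRels m n) →*
      PresentedGroup (doubledBaumslagSolitarRels m n k) :=
  toGroup (f := ![of 0, of 1]) <| by
    rintro r rfl
    exact (map_bsRelator_eq_one_iff _ _ _ _ _).mpr (by simpa using doubled_semiconjBy_left)

theorem foldHom_comp_firstCopyHom :
    (foldHom m n k).comp (firstCopyHom m n k) = MonoidHom.id _ := by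
  ext i
  fin_cases i <;> simp [foldHom, firstCopyHom]

theorem firstCopyHom_comp_foldHom {j : ℕ} (hmn : IsCoprime m n) (hk : k ∣ (m * n) ^ j) :
    (firstCopyHom m n k).comp (foldHom m n k) = MonoidHom.id _ := by
  ext i
  fin_cases i <;>
    simp [foldHom, firstCopyHom, doubled_of_zero_eq_of_two, doubled_of_one_eq_of_three hmn hk]

theorem doubled_presentation_iso_bs_general {j : ℕ} (hmn : IsCoprime m n)
    (hk : k ∣ (m * n) ^ j) :
    ∃ e : PresentedGroup (doubledBaumslagSolitarRels m n k) ≃*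
        PresentedGroup (baumslagSolitarRels m n),
      e (of 0) = of 0 ∧ e (of 1) = of 1 ∧ e (of 2) = of 0 ∧ e (of 3) = of 1 :=
  ⟨(foldHom m n k).toMulEquiv (firstCopyHom m n k) (firstCopyHom_comp_foldHom hmn hk)
    foldHom_comp_firstCopyHom, by simp [foldHom], by simp [foldHom], by simp [foldHom],
    by simp [foldHom]⟩

end DoubledPresentation

/-- The presented group
`⟨x, y, x′, y′ | x y² x⁻¹ = y³, x′ y′² x′⁻¹ = y′³, x = x′, y⁴ = y′⁴⟩` is
isomorphic to `G = ⟨x, y | x y² x⁻¹ = y³⟩` via `x ↦ x`, `y ↦ y`, `x′ ↦ x`,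
`y′ ↦ y`. -/
theorem doubled_presentation_iso_bs :
    ∃ e : PresentedGroup doubledRels ≃* BSGroup,
      e (PresentedGroup.of 0) = PresentedGroup.of 0 ∧
      e (PresentedGroup.of 1) = PresentedGroup.of 1 ∧
      e (PresentedGroup.of 2) = PresentedGroup.of 0 ∧
      e (PresentedGroup.of 3) = PresentedGroup.of 1 := by
  unfold BSGroup
  rw [bsRels_eq_baumslagSolitarRels, doubledRels_eq_doubledBaumslagSolitarRels]
  exact doubled_presentation_iso_bs_general (j := 2) (by norm_num) (by norm_num)
end

section
/- Let T = ⟨x, y | x² = y³⟩ be the trefoil group. For every natural number i, the two elements x^{2i+1} and y^{3i+1} generate T. -/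
/-- The single relator `x² y⁻³` in the free group on two generators. -/
def trefoilRels : Set (FreeGroup (Fin 2)) :=
  {FreeGroup.of 0 ^ 2 * (FreeGroup.of 1 ^ 3)⁻¹}

/-- The trefoil group `T = ⟨x, y | x² = y³⟩`. -/
abbrev TrefoilGroup := PresentedGroup trefoilRels

/-! Write `c = x ^ p = y ^ q`. The subgroup `H` generated by `x ^ a` and `y ^ b` contains
`c ^ a = (x ^ a) ^ p` and `c ^ b = (y ^ b) ^ q`, hence `c` as soon as `a` and `b` are coprime. Now
`H` contains `x ^ a` and `x ^ p`, hence `x` when `a` and `p` are coprime, and likewise `y` when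
`b` and `q` are. -/

section Group

variable {G : Type*} [Group G] {H : Subgroup G} {x y : G} {a b p q : ℤ}

theorem mem_of_zpow_mem_of_isCoprime (hab : IsCoprime a b) (ha : x ^ a ∈ H) (hb : x ^ b ∈ H) :
    x ∈ H := by
  obtain ⟨u, v, huv⟩ := hab
  have bezout : (x ^ a) ^ u * (x ^ b) ^ v = x := by
    rw [← zpow_mul', ← zpow_mul', ← zpow_add, huv, zpow_one]
  exact bezout ▸ H.mul_mem (H.zpow_mem ha u) (H.zpow_mem hb v)

theorem zpow_mem_of_zpow_eq_zpow (hxy : x ^ p = y ^ q) (hab : IsCoprime a b)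
    (hx : x ^ a ∈ H) (hy : y ^ b ∈ H) : x ^ p ∈ H := by
  refine mem_of_zpow_mem_of_isCoprime hab ?_ ?_
  · rw [zpow_comm]
    exact H.zpow_mem hx p
  · rw [hxy, zpow_comm]
    exact H.zpow_mem hy q

theorem closure_zpow_pair_eq_closure_pair (hxy : x ^ p = y ^ q) (hab : IsCoprime a b)
    (hap : IsCoprime a p) (hbq : IsCoprime b q) :
    Subgroup.closure {x ^ a, y ^ b} = Subgroup.closure {x, y} := by
  apply le_antisymm
  · have hx : x ∈ Subgroup.closure {x, y} := Subgroup.subset_closure (by simp)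
    have hy : y ∈ Subgroup.closure {x, y} := Subgroup.subset_closure (by simp)
    rw [Subgroup.closure_le, Set.pair_subset_iff]
    exact ⟨Subgroup.zpow_mem _ hx a, Subgroup.zpow_mem _ hy b⟩
  · have hxa : x ^ a ∈ Subgroup.closure {x ^ a, y ^ b} := Subgroup.subset_closure (by simp)
    have hyb : y ^ b ∈ Subgroup.closure {x ^ a, y ^ b} := Subgroup.subset_closure (by simp)
    have hxp : x ^ p ∈ Subgroup.closure {x ^ a, y ^ b} :=
      zpow_mem_of_zpow_eq_zpow hxy hab hxa hyb
    have hyq : y ^ q ∈ Subgroup.closure {x ^ a, y ^ b} := hxy ▸ hxp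
    rw [Subgroup.closure_le, Set.pair_subset_iff]
    exact ⟨mem_of_zpow_mem_of_isCoprime hap hxa hxp, mem_of_zpow_mem_of_isCoprime hbq hyb hyq⟩

end Group

theorem trefoilGroup_of_zero_sq_eq_of_one_cube :
    (PresentedGroup.of 0 : TrefoilGroup) ^ 2 = PresentedGroup.of 1 ^ 3 :=
  PresentedGroup.mk_eq_mk_of_mul_inv_mem (Set.mem_singleton _)

theorem trefoilGroup_closure_of_zero_of_one :
    Subgroup.closure ({PresentedGroup.of 0, PresentedGroup.of 1} : Set TrefoilGroup) = ⊤ := by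
  have hrange : Set.range (PresentedGroup.of : Fin 2 → TrefoilGroup) =
      {PresentedGroup.of 0, PresentedGroup.of 1} := by
    ext g
    simp [Fin.exists_fin_two, eq_comm]
  rw [← hrange, PresentedGroup.closure_range_of]

/-- `3 * a` and `2 * b` are the images of `x ^ a` and `y ^ b` under the abelianization `T → ℤ`,
`x ↦ 3`, `y ↦ 2`. -/
theorem trefoil_generated_by_odd_powers_general {a b : ℤ}
    (hcoprime : IsCoprime (3 * a) (2 * b)) :
    Subgroup.closure
      ({(PresentedGroup.of 0 : TrefoilGroup) ^ a,
        (PresentedGroup.of 1 : TrefoilGroup) ^ b} : Set TrefoilGroup) = ⊤ := by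
  obtain ⟨⟨-, ha2⟩, h3b, hab⟩ :
      (IsCoprime (3 : ℤ) 2 ∧ IsCoprime a 2) ∧ IsCoprime 3 b ∧ IsCoprime a b := by
    simpa only [IsCoprime.mul_left_iff, IsCoprime.mul_right_iff] using hcoprime
  rw [closure_zpow_pair_eq_closure_pair (p := 2) (q := 3)
    (mod_cast trefoilGroup_of_zero_sq_eq_of_one_cube) hab ha2 h3b.symm,
    trefoilGroup_closure_of_zero_of_one]

/-- In the trefoil group `T = ⟨x, y | x² = y³⟩`, for every natural number `i`
the elements `x^(2i+1)` and `y^(3i+1)` generate `T`. -/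
theorem trefoil_generated_by_odd_powers (i : ℕ) :
    Subgroup.closure
      ({(PresentedGroup.of 0 : TrefoilGroup) ^ (2 * i + 1),
        (PresentedGroup.of 1 : TrefoilGroup) ^ (3 * i + 1)} : Set TrefoilGroup) = ⊤ := by
  have hcoprime : IsCoprime (3 * ((2 * i + 1 : ℕ) : ℤ)) (2 * ((3 * i + 1 : ℕ) : ℤ)) :=
    ⟨1, -1, by push_cast; ring⟩
  simpa only [zpow_natCast] using trefoil_generated_by_odd_powers_general hcoprime
end

section
/- Let T = ⟨x, y | x² = y³⟩ be the trefoil group and let i be a natural number. Then the presented group ⟨ x, y, x′, y′ | x² = y³, x′² = y′³, x^{2i+1} = x′^{2i+1}, y^{3i+1} = y′^{3i+1} ⟩ is isomorphic to T, via the map sending x ↦ x, y ↦ y, x′ ↦ x, y′ ↦ y. -/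
/-- The relators `x² y⁻³`, `x′² y′⁻³`, `x^(2i+1) x′^(-(2i+1))`,
`y^(3i+1) y′^(-(3i+1))` in the free group on four generators
`x = 0`, `y = 1`, `x′ = 2`, `y′ = 3`. -/
def trefoilDoubledRels (i : ℕ) : Set (FreeGroup (Fin 4)) :=
  {FreeGroup.of 0 ^ 2 * (FreeGroup.of 1 ^ 3)⁻¹,
   FreeGroup.of 2 ^ 2 * (FreeGroup.of 3 ^ 3)⁻¹,
   FreeGroup.of 0 ^ (2 * i + 1) * (FreeGroup.of 2 ^ (2 * i + 1))⁻¹,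
   FreeGroup.of 1 ^ (3 * i + 1) * (FreeGroup.of 3 ^ (3 * i + 1))⁻¹}

/-!
The set of integers `k` with `a ^ k = b ^ k` is a subgroup of `ℤ`, so two elements of a group that
have equal `m`-th and equal `n`-th powers for coprime `m` and `n` are equal. In the doubled group,
this applies first to `x ^ p = y ^ q` and `x′ ^ p = y′ ^ q`, whose `m`-th and `n`-th powers agree
because `x ^ m = x′ ^ m` and `y ^ n = y′ ^ n`. It then applies to `x`, `x′` (exponents `p`, `m`) and
to `y`, `y′` (exponents `q`, `n`), so the primed generators are redundant. The trefoil is the case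
`p = 2`, `q = 3`, `m = 2 * i + 1`, `n = 3 * i + 1`, where `m` and `n` are coprime because
`3 * (2 * i + 1) - 2 * (3 * i + 1) = 1`.
-/

section PowersInGroups

variable {G : Type*} [Group G] {p q m n : ℕ}

theorem eq_of_pow_eq_pow_of_coprime {a b : G} (hmn : m.Coprime n)
    (hm : a ^ m = b ^ m) (hn : a ^ n = b ^ n) : a = b := by
  have bezout : (m * m.gcdA n + n * m.gcdB n : ℤ) = 1 := by
    rw [← Nat.gcd_eq_gcd_ab, hmn.gcd_eq_one, Nat.cast_one]
  have recover (c : G) : (c ^ m) ^ m.gcdA n * (c ^ n) ^ m.gcdB n = c := by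
    rw [← zpow_natCast, ← zpow_natCast, ← zpow_mul, ← zpow_mul, ← zpow_add, bezout, zpow_one]
  rw [← recover a, hm, hn, recover b]

theorem eq_and_eq_of_pow_eq_pow_of_coprime {x y x' y' : G}
    (hmn : m.Coprime n) (hpm : p.Coprime m) (hqn : q.Coprime n)
    (hxy : x ^ p = y ^ q) (hxy' : x' ^ p = y' ^ q) (hx : x ^ m = x' ^ m) (hy : y ^ n = y' ^ n) :
    x = x' ∧ y = y' := by
  have hxp : x ^ p = x' ^ p := by
    refine eq_of_pow_eq_pow_of_coprime hmn ?_ ?_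
    · rw [pow_right_comm, hx, pow_right_comm]
    · rw [hxy, hxy', pow_right_comm, hy, pow_right_comm]
  have hyq : y ^ q = y' ^ q := by rw [← hxy, hxp, hxy']
  exact ⟨eq_of_pow_eq_pow_of_coprime hpm hxp hx, eq_of_pow_eq_pow_of_coprime hqn hyq hy⟩

end PowersInGroups

section Presentations

variable {α β : Type*} {rels : Set (FreeGroup α)} {rels' : Set (FreeGroup β)}

theorem lift_presentedGroup_of_eq_one {w : FreeGroup α} (hw : w ∈ rels) :
    FreeGroup.lift (PresentedGroup.of : α → PresentedGroup rels) w = 1 := by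
  have lift_of : FreeGroup.lift PresentedGroup.of = PresentedGroup.mk rels :=
    FreeGroup.ext_hom _ _ fun _ ↦ FreeGroup.lift_apply_of
  rw [lift_of, PresentedGroup.one_of_mem hw]

variable {r : α → β} {s : β → α}
  (hr : ∀ w ∈ rels,
    FreeGroup.lift (fun a ↦ (PresentedGroup.of (r a) : PresentedGroup rels')) w = 1)
  (hs : ∀ w ∈ rels',
    FreeGroup.lift (fun b ↦ (PresentedGroup.of (s b) : PresentedGroup rels)) w = 1)
  (hsr : ∀ a, (PresentedGroup.of (s (r a)) : PresentedGroup rels) = PresentedGroup.of a)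
  (hrs : ∀ b, (PresentedGroup.of (r (s b)) : PresentedGroup rels') = PresentedGroup.of b)

/-- The isomorphism of presented groups induced by maps `r` and `s` between their generators that
respect the relations. The maps are only required to be mutually inverse modulo the relations, so
that redundant generators can be eliminated. -/
def presentedGroupEquivOfGenerators : PresentedGroup rels ≃* PresentedGroup rels' :=
  MonoidHom.toMulEquiv (PresentedGroup.toGroup hr) (PresentedGroup.toGroup hs)
    (PresentedGroup.ext fun a ↦ by simp [hsr])
    (PresentedGroup.ext fun b ↦ by simp [hrs])

theorem presentedGroupEquivOfGenerators_of (a : α) :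
    presentedGroupEquivOfGenerators hr hs hsr hrs (PresentedGroup.of a) =
      PresentedGroup.of (r a) :=
  PresentedGroup.toGroup.of hr

end Presentations

section TorusKnotGroups

/-- The relator `x ^ p * (y ^ q)⁻¹`, with `x = 0` and `y = 1`. For coprime `p` and `q` it presents
the group of the `(p, q)` torus knot. -/
def torusRels (p q : ℕ) : Set (FreeGroup (Fin 2)) :=
  {FreeGroup.of 0 ^ p * (FreeGroup.of 1 ^ q)⁻¹}

/-- The relators of two copies of `⟨x, y | x ^ p = y ^ q⟩` whose generators are identified only
through the powers `x ^ m = x′ ^ m` and `y ^ n = y′ ^ n`, with `x = 0`, `y = 1`, `x′ = 2`, `y′ = 3`.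
-/
def torusDoubledRels (p q m n : ℕ) : Set (FreeGroup (Fin 4)) :=
  {FreeGroup.of 0 ^ p * (FreeGroup.of 1 ^ q)⁻¹,
   FreeGroup.of 2 ^ p * (FreeGroup.of 3 ^ q)⁻¹,
   FreeGroup.of 0 ^ m * (FreeGroup.of 2 ^ m)⁻¹,
   FreeGroup.of 1 ^ n * (FreeGroup.of 3 ^ n)⁻¹}

variable {p q m n : ℕ}

theorem forall_mem_torusRels_lift_eq_one_iff {G : Type*} [Group G] {f : Fin 2 → G} :
    (∀ w ∈ torusRels p q, FreeGroup.lift f w = 1) ↔ f 0 ^ p = f 1 ^ q := by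
  simp [torusRels, mul_inv_eq_one]

theorem forall_mem_torusDoubledRels_lift_eq_one_iff {G : Type*} [Group G] {f : Fin 4 → G} :
    (∀ w ∈ torusDoubledRels p q m n, FreeGroup.lift f w = 1) ↔
      f 0 ^ p = f 1 ^ q ∧ f 2 ^ p = f 3 ^ q ∧ f 0 ^ m = f 2 ^ m ∧ f 1 ^ n = f 3 ^ n := by
  simp [torusDoubledRels, mul_inv_eq_one]

theorem torusDoubled_of_eq_of (hmn : m.Coprime n) (hpm : p.Coprime m) (hqn : q.Coprime n) :
    (PresentedGroup.of 0 : PresentedGroup (torusDoubledRels p q m n)) = PresentedGroup.of 2 ∧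
      (PresentedGroup.of 1 : PresentedGroup (torusDoubledRels p q m n)) = PresentedGroup.of 3 := by
  obtain ⟨hxy, hxy', hx, hy⟩ := forall_mem_torusDoubledRels_lift_eq_one_iff.1 fun _ ↦
    lift_presentedGroup_of_eq_one (rels := torusDoubledRels p q m n)
  exact eq_and_eq_of_pow_eq_pow_of_coprime hmn hpm hqn hxy hxy' hx hy

theorem trefoil_doubled_presentation_iso_general
    (hmn : m.Coprime n) (hpm : p.Coprime m) (hqn : q.Coprime n) :
    ∃ e : PresentedGroup (torusDoubledRels p q m n) ≃* PresentedGroup (torusRels p q),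
      e (PresentedGroup.of 0) = PresentedGroup.of 0 ∧
      e (PresentedGroup.of 1) = PresentedGroup.of 1 ∧
      e (PresentedGroup.of 2) = PresentedGroup.of 0 ∧
      e (PresentedGroup.of 3) = PresentedGroup.of 1 := by
  have torus_rel := forall_mem_torusRels_lift_eq_one_iff.1 fun _ ↦
    lift_presentedGroup_of_eq_one (rels := torusRels p q)
  have doubled_rels := forall_mem_torusDoubledRels_lift_eq_one_iff.1 fun _ ↦
    lift_presentedGroup_of_eq_one (rels := torusDoubledRels p q m n)
  obtain ⟨hx, hy⟩ := torusDoubled_of_eq_of hmn hpm hqn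
  have e_of := presentedGroupEquivOfGenerators_of (r := ![0, 1, 0, 1]) (s := ![0, 1])
    (forall_mem_torusDoubledRels_lift_eq_one_iff.2 ⟨torus_rel, torus_rel, rfl, rfl⟩)
    (forall_mem_torusRels_lift_eq_one_iff.2 doubled_rels.1)
    (Fin.forall_fin_succ.2 ⟨rfl, Fin.forall_fin_succ.2 ⟨rfl, Fin.forall_fin_two.2 ⟨hx, hy⟩⟩⟩)
    (Fin.forall_fin_two.2 ⟨rfl, rfl⟩)
  exact ⟨_, e_of 0, e_of 1, e_of 2, e_of 3⟩

end TorusKnotGroups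

/-- For each natural number `i`, the presented group
`⟨x, y, x′, y′ | x² = y³, x′² = y′³, x^(2i+1) = x′^(2i+1), y^(3i+1) = y′^(3i+1)⟩`
is isomorphic to the trefoil group `T = ⟨x, y | x² = y³⟩` via `x ↦ x`,
`y ↦ y`, `x′ ↦ x`, `y′ ↦ y`. -/
theorem trefoil_doubled_presentation_iso (i : ℕ) :
    ∃ e : PresentedGroup (trefoilDoubledRels i) ≃* TrefoilGroup,
      e (PresentedGroup.of 0) = PresentedGroup.of 0 ∧
      e (PresentedGroup.of 1) = PresentedGroup.of 1 ∧
      e (PresentedGroup.of 2) = PresentedGroup.of 0 ∧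
      e (PresentedGroup.of 3) = PresentedGroup.of 1 := by
  have hmn : (2 * i + 1).Coprime (3 * i + 1) :=
    Nat.isCoprime_iff_coprime.1 ⟨3, -2, by push_cast; ring⟩
  exact trefoil_doubled_presentation_iso_general hmn (by simp) (by simp)
end
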